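/- arXiv:1708.03182 — 8 statements merged into one kernel-verified Lean document; each statement's English description precedes it below -/
import Mathlib

section
/- For every matrix e : Matrix (Fin 4) (Fin 4) ℝ and all indices A, a, b, c ∈ Fin 4, one has (1/2) * ∑_{d,f,B,C,D} ε a b d f * ε A B C D * e C d * e D f * e B c = (Matrix.adjugate e) a A * (if b = c then 1 else 0) − (Matrix.adjugate e) b A * (if a = c then 1 else 0). (This is the dual identity ⋆B^{ab}_{AB} e^B_c = (det e)(e^a_A δ^b_c − e^b_A δ^a_c) for the simple bivector B = ⋆(e∧e), written with the adjugate so that it holds without invertibility.) -/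
/-!
Contracting `ε A B C D` with the columns `c, d, f` of `e` gives the determinant whose first row is the
basis vector `e_A` and whose other rows are those columns (`eps_contract_vectors`). By Cramer's rule
`(adj e)^g_A` is the determinant of `eᵀ` with row `g` replaced by `e_A`, and the two differ only by a
permutation of the rows (`det_front_row`). Hence
`∑ ε A B C D e^B_c e^C_d e^D_f = ∑ g, ε g c d f (adj e)^g_A` (`eps_contract_columns`), with no
invertibility needed. Substituting this into the left-hand side leaves the double contraction
`∑ ε a b d f ε g c d f = 2 (δ_ag δ_bc - δ_ac δ_bg)` (`eps_contract_two`), whose two terms pick out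
`(adj e)^a_A δ_bc` and `(adj e)^b_A δ_ac`.
-/

/-- The totally antisymmetric Levi-Civita symbol on `Fin 4`, with `ε 0 1 2 3 = 1`. -/
noncomputable def eps (a b c d : Fin 4) : ℝ :=
  ((Int.sign ((b.1 : ℤ) - a.1) * Int.sign ((c.1 : ℤ) - a.1) * Int.sign ((d.1 : ℤ) - a.1) *
    Int.sign ((c.1 : ℤ) - b.1) * Int.sign ((d.1 : ℤ) - b.1) * Int.sign ((d.1 : ℤ) - c.1) : ℤ) : ℝ)

/-- The integer whose cast is `eps`; on it, numerical identities are decidable. -/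
def epsInt (a b c d : Fin 4) : ℤ :=
  Int.sign ((b.1 : ℤ) - a.1) * Int.sign ((c.1 : ℤ) - a.1) * Int.sign ((d.1 : ℤ) - a.1) *
    Int.sign ((c.1 : ℤ) - b.1) * Int.sign ((d.1 : ℤ) - b.1) * Int.sign ((d.1 : ℤ) - c.1)

lemma eps_eq_cast (a b c d : Fin 4) : eps a b c d = (epsInt a b c d : ℝ) := rfl

lemma epsInt_contract_two : ∀ a b g c : Fin 4,
    ∑ d : Fin 4, ∑ f : Fin 4, epsInt a b d f * epsInt g c d f
      = 2 * ((if a = g then 1 else 0) * (if b = c then 1 else 0)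
        - (if a = c then 1 else 0) * (if b = g then 1 else 0)) := by
  decide +kernel

lemma eps_contract_two (a b g c : Fin 4) :
    ∑ d : Fin 4, ∑ f : Fin 4, eps a b d f * eps g c d f
      = 2 * ((if a = g then 1 else 0) * (if b = c then 1 else 0)
        - (if a = c then 1 else 0) * (if b = g then 1 else 0)) := by
  simp only [eps_eq_cast]
  exact_mod_cast epsInt_contract_two a b g c

/-- Contracting the last three indices of `ε` with vectors `x, y, z` gives the determinant with
rows `e_A, x, y, z`. -/
lemma eps_contract_vectors (A : Fin 4) (x y z : Fin 4 → ℝ) :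
    ∑ B : Fin 4, ∑ C : Fin 4, ∑ D : Fin 4, eps A B C D * x B * y C * z D
      = (Matrix.of ![Pi.single A 1, x, y, z]).det := by
  fin_cases A <;>
    simp [eps, show Int.sign 2 = 1 from rfl, show Int.sign 3 = 1 from rfl,
      Matrix.det_succ_row_zero, Fin.sum_univ_succ, Fin.succAbove, Pi.single_apply] <;> ring

lemma epsInt_perm : ∀ σ : Equiv.Perm (Fin 4),
    epsInt (σ 0) (σ 1) (σ 2) (σ 3) = (Equiv.Perm.sign σ : ℤ) := by
  decide +kernel

lemma epsInt_perm_of_ne : ∀ (σ : Equiv.Perm (Fin 4)) (g : Fin 4), g ≠ σ 0 →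
    epsInt g (σ 1) (σ 2) (σ 3) = 0 := by
  decide +kernel

lemma epsInt_of_eq : ∀ g c d f : Fin 4, c = d ∨ c = f ∨ d = f → epsInt g c d f = 0 := by
  decide +kernel

lemma exists_perm_or_eq : ∀ c d f : Fin 4, (c = d ∨ c = f ∨ d = f) ∨
    ∃ σ : Equiv.Perm (Fin 4), σ 1 = c ∧ σ 2 = d ∧ σ 3 = f := by
  decide +kernel

/-- Replacing row `g` of `M` by `v` and moving it to the front permutes the rows of `M`, with
sign `ε g c d f` when `g, c, d, f` are distinct; if two of `c, d, f` agree, both sides vanish. -/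
lemma det_front_row (M : Matrix (Fin 4) (Fin 4) ℝ) (v : Fin 4 → ℝ) (c d f : Fin 4) :
    (Matrix.of ![v, M c, M d, M f]).det = ∑ g : Fin 4, eps g c d f * (M.updateRow g v).det := by
  rcases exists_perm_or_eq c d f with h | ⟨σ, rfl, rfl, rfl⟩
  · simp only [eps_eq_cast, epsInt_of_eq _ c d f h, Int.cast_zero, zero_mul, Finset.sum_const_zero]
    rcases h with rfl | rfl | rfl
    · exact Matrix.det_zero_of_row_eq (i := 1) (j := 2) (by decide) rfl
    · exact Matrix.det_zero_of_row_eq (i := 1) (j := 3) (by decide) rfl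
    · exact Matrix.det_zero_of_row_eq (i := 2) (j := 3) (by decide) rfl
  · have hrows : Matrix.of ![v, M (σ 1), M (σ 2), M (σ 3)]
        = (M.updateRow (σ 0) v).submatrix σ id := by
      ext i j
      fin_cases i <;> simp [Matrix.updateRow_apply]
    rw [hrows, Matrix.det_permute, Finset.sum_eq_single (σ 0), eps_eq_cast, epsInt_perm]
    · intro g _ hg
      rw [eps_eq_cast, epsInt_perm_of_ne σ g hg, Int.cast_zero, zero_mul]
    · simp

/-- The cofactor expansion of a contraction of `ε` with three columns of `e`. -/
lemma eps_contract_columns (e : Matrix (Fin 4) (Fin 4) ℝ) (A c d f : Fin 4) :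
    ∑ B : Fin 4, ∑ C : Fin 4, ∑ D : Fin 4, eps A B C D * e B c * e C d * e D f
      = ∑ g : Fin 4, eps g c d f * (Matrix.adjugate e) g A := by
  rw [eps_contract_vectors A (fun B => e B c) (fun C => e C d) (fun D => e D f)]
  -- Columns of `e` are rows of its transpose, definitionally.
  refine (det_front_row e.transpose (Pi.single A 1) c d f).trans ?_
  refine Finset.sum_congr rfl fun g _ => ?_
  rw [← Matrix.adjugate_apply, ← Matrix.adjugate_transpose, Matrix.transpose_apply]

/-- ⋆B^{ab}_{AB} e^B_c = (det e)(e^a_A δ^b_c − e^b_A δ^a_c) for B = ⋆(e∧e),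
written with the adjugate. -/
theorem dual_simple_bivector_identity (e : Matrix (Fin 4) (Fin 4) ℝ) (A a b c : Fin 4) :
    (1/2) * ∑ d : Fin 4, ∑ f : Fin 4, ∑ B : Fin 4, ∑ C : Fin 4, ∑ D : Fin 4,
        eps a b d f * eps A B C D * e C d * e D f * e B c
      = (Matrix.adjugate e) a A * (if b = c then 1 else 0)
        - (Matrix.adjugate e) b A * (if a = c then 1 else 0) := by
  have h1 : ∀ d f : Fin 4, ∑ B : Fin 4, ∑ C : Fin 4, ∑ D : Fin 4,
      eps a b d f * eps A B C D * e C d * e D f * e B c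
      = ∑ g : Fin 4, (Matrix.adjugate e) g A * (eps a b d f * eps g c d f) := by
    intro d f
    calc _ = eps a b d f * ∑ B : Fin 4, ∑ C : Fin 4, ∑ D : Fin 4,
          eps A B C D * e B c * e C d * e D f := by
          simp only [Finset.mul_sum]
          refine Finset.sum_congr rfl fun B _ => Finset.sum_congr rfl fun C _ =>
            Finset.sum_congr rfl fun D _ => by ring
      _ = _ := by
          rw [eps_contract_columns, Finset.mul_sum]
          exact Finset.sum_congr rfl fun g _ => by ring
  have h2 : ∑ d : Fin 4, ∑ f : Fin 4, ∑ g : Fin 4,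
      (Matrix.adjugate e) g A * (eps a b d f * eps g c d f)
      = ∑ g : Fin 4, (Matrix.adjugate e) g A *
        ∑ d : Fin 4, ∑ f : Fin 4, eps a b d f * eps g c d f := by
    simp only [Finset.mul_sum]
    rw [Finset.sum_comm (γ := Fin 4)]
    conv_rhs => rw [Finset.sum_comm]
    rw [Finset.sum_comm]
    exact Finset.sum_congr rfl fun d _ => Finset.sum_comm
  simp only [h1, h2, eps_contract_two]
  simp only [mul_sub, Finset.sum_sub_distrib, ← mul_assoc, mul_ite, mul_one, mul_zero,
    Finset.sum_ite_eq, Finset.mem_univ, if_true]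
  split_ifs <;> simp <;> ring
end

section
/- Linear simplicity lemma, dual (starred) form: let e : Matrix (Fin 4) (Fin 4) ℝ be a non-degenerate tetrad (det e ≠ 0) and let B be a bivector field. Then the following are equivalent: (I) for all A, a, b, c ∈ Fin 4 with c ≠ a and c ≠ b one has ∑_{B'} (⋆B) a b A B' * e B' c = 0, and for all A, a ∈ Fin 4 and all b, c ≠ a one has ∑_{B'} (⋆B) a b A B' * e B' b = ∑_{B'} (⋆B) a c A B' * e B' c; (II) B is simple with respect to e. -/
/-- Spacetime Hodge dual of a bivector field: (⋆B) a b A B' = (1/2) ε^{abcd} B_{AB'cd}. -/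
noncomputable def starB (B : Fin 4 → Fin 4 → Fin 4 → Fin 4 → ℝ) (a b A B' : Fin 4) : ℝ :=
  (1/2) * ∑ c : Fin 4, ∑ d : Fin 4, eps a b c d * B A B' c d

/-- `B` is simple with respect to the tetrad `e`: B^{AB}_{ab} = λ ε^{AB}_{CD} e^C_a e^D_b. -/
def IsSimple (e : Matrix (Fin 4) (Fin 4) ℝ) (B : Fin 4 → Fin 4 → Fin 4 → Fin 4 → ℝ) : Prop :=
  ∃ lam : ℝ, ∀ A B' a b : Fin 4,
    B A B' a b = lam * ∑ C : Fin 4, ∑ D : Fin 4, eps A B' C D * e C a * e D b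

/-- The model simple bivector `ε_{ABCD} e^C_a e^D_b`, of which a simple field is a multiple. -/
noncomputable def wedge (e : Matrix (Fin 4) (Fin 4) ℝ) (A B' a b : Fin 4) : ℝ :=
  ∑ C : Fin 4, ∑ D : Fin 4, eps A B' C D * e C a * e D b

/-- The linear simplicity constraints on a field `X`, condition (I) of the theorem. -/
def Constraints (e : Matrix (Fin 4) (Fin 4) ℝ)
    (X : Fin 4 → Fin 4 → Fin 4 → Fin 4 → ℝ) : Prop :=
  (∀ A a b c : Fin 4, c ≠ a → c ≠ b → ∑ B' : Fin 4, starB X a b A B' * e B' c = 0) ∧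
  (∀ A a b c : Fin 4, b ≠ a → c ≠ a →
    ∑ B' : Fin 4, starB X a b A B' * e B' b = ∑ B' : Fin 4, starB X a c A B' * e B' c)

/-- The tetrad components `(⋆X)_{ab}^{AB'} e_{Ad} e_{B'c}` of the dual, with both internal indices
converted to spacetime ones. -/
noncomputable def comp (e : Matrix (Fin 4) (Fin 4) ℝ)
    (X : Fin 4 → Fin 4 → Fin 4 → Fin 4 → ℝ) (a b d c : Fin 4) : ℝ :=
  ∑ A : Fin 4, e A d * ∑ B' : Fin 4, starB X a b A B' * e B' c

lemma sign_two : Int.sign 2 = 1 := rfl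

lemma sign_three : Int.sign 3 = 1 := rfl

lemma eps_swap_left (a b c d : Fin 4) : eps b a c d = -eps a b c d := by
  fin_cases a <;> fin_cases b <;> fin_cases c <;> fin_cases d <;> simp [eps, sign_two, sign_three]

lemma eps_swap_mid (a b c d : Fin 4) : eps a c b d = -eps a b c d := by
  fin_cases a <;> fin_cases b <;> fin_cases c <;> fin_cases d <;> simp [eps, sign_two, sign_three]

lemma eps_swap_right (a b c d : Fin 4) : eps a b d c = -eps a b c d := by
  fin_cases a <;> fin_cases b <;> fin_cases c <;> fin_cases d <;> simp [eps, sign_two, sign_three]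

/-- The Hodge dual is an involution on bivectors; `eps` carries no metric sign. -/
lemma starB_starB (X : Fin 4 → Fin 4 → Fin 4 → Fin 4 → ℝ)
    (hst : ∀ A B' a b : Fin 4, X A B' a b = -X A B' b a) (A B' a b : Fin 4) :
    X A B' a b = (1 / 2) * ∑ c : Fin 4, ∑ d : Fin 4, eps a b c d * starB X c d A B' := by
  have h00 := hst A B' 0 0
  have h11 := hst A B' 1 1
  have h22 := hst A B' 2 2
  have h33 := hst A B' 3 3
  have h01 := hst A B' 0 1
  have h02 := hst A B' 0 2
  have h03 := hst A B' 0 3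
  have h12 := hst A B' 1 2
  have h13 := hst A B' 1 3
  have h23 := hst A B' 2 3
  fin_cases a <;> fin_cases b <;> simp [starB, eps, sign_two, sign_three, Fin.sum_univ_four] <;>
    linarith

lemma starB_swap_st (X : Fin 4 → Fin 4 → Fin 4 → Fin 4 → ℝ) (a b A B' : Fin 4) :
    starB X b a A B' = -starB X a b A B' := by
  simp only [starB, eps_swap_left a b, neg_mul, Finset.sum_neg_distrib, mul_neg]

lemma starB_swap_int (X : Fin 4 → Fin 4 → Fin 4 → Fin 4 → ℝ)
    (hint : ∀ A B' a b : Fin 4, X A B' a b = -X B' A a b) (a b A B' : Fin 4) :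
    starB X a b B' A = -starB X a b A B' := by
  simp only [starB, hint B' A, Finset.sum_neg_distrib, mul_neg]

lemma starB_smul (lam : ℝ) (X : Fin 4 → Fin 4 → Fin 4 → Fin 4 → ℝ) (a b A B' : Fin 4) :
    starB (fun A B' a b => lam * X A B' a b) a b A B' = lam * starB X a b A B' := by
  simp only [starB, Finset.mul_sum]
  refine Finset.sum_congr rfl fun _ _ => Finset.sum_congr rfl fun _ _ => by ring

lemma wedge_swap_int (e : Matrix (Fin 4) (Fin 4) ℝ) (A B' a b : Fin 4) :
    wedge e A B' a b = -wedge e B' A a b := by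
  simp only [wedge, eps_swap_left B' A, neg_mul, Finset.sum_neg_distrib]

lemma wedge_swap_st (e : Matrix (Fin 4) (Fin 4) ℝ) (A B' a b : Fin 4) :
    wedge e A B' a b = -wedge e A B' b a := by
  simp only [wedge]
  rw [Finset.sum_comm, ← Finset.sum_neg_distrib]
  refine Finset.sum_congr rfl fun C _ => ?_
  rw [← Finset.sum_neg_distrib]
  refine Finset.sum_congr rfl fun D _ => ?_
  rw [eps_swap_right]; ring

/-- The contraction `ε_{ABCD} e^B_x e^C_c e^D_d`. -/
noncomputable def triple (e : Matrix (Fin 4) (Fin 4) ℝ) (A x c d : Fin 4) : ℝ :=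
  ∑ B' : Fin 4, wedge e A B' c d * e B' x

lemma triple_swap_right (e : Matrix (Fin 4) (Fin 4) ℝ) (A x c d : Fin 4) :
    triple e A x d c = -triple e A x c d := by
  simp only [triple, wedge_swap_st e A _ d c, neg_mul, Finset.sum_neg_distrib]

lemma triple_swap_left (e : Matrix (Fin 4) (Fin 4) ℝ) (A x c d : Fin 4) :
    triple e A c x d = -triple e A x c d := by
  simp only [triple, wedge, Finset.sum_mul]
  rw [Finset.sum_comm, ← Finset.sum_neg_distrib]
  refine Finset.sum_congr rfl fun B' _ => ?_
  rw [← Finset.sum_neg_distrib]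
  refine Finset.sum_congr rfl fun C _ => ?_
  rw [← Finset.sum_neg_distrib]
  refine Finset.sum_congr rfl fun D _ => ?_
  rw [eps_swap_mid]; ring

lemma starB_wedge_contract (e : Matrix (Fin 4) (Fin 4) ℝ) (A a b x : Fin 4) :
    ∑ B' : Fin 4, starB (wedge e) a b A B' * e B' x =
      (1 / 2) * ∑ c : Fin 4, ∑ d : Fin 4, eps a b c d * triple e A x c d := by
  simp only [starB, triple, Fin.sum_univ_four]
  ring

set_option maxHeartbeats 1000000 in
/-- The model bivector satisfies the constraints, since `triple` is totally antisymmetric in its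
three spacetime indices: contracted with `ε_{abcd}` it survives only if `x ∈ {a, b}`. -/
lemma constraints_wedge (e : Matrix (Fin 4) (Fin 4) ℝ) : Constraints e (wedge e) := by
  have hr : ∀ A x c : Fin 4, triple e A x c c = 0 := fun A x c => by
    linarith [triple_swap_right e A x c c]
  have hl : ∀ A x d : Fin 4, triple e A x x d = 0 := fun A x d => by
    linarith [triple_swap_left e A x x d]
  have ho : ∀ A x c : Fin 4, triple e A x c x = 0 := fun A x c => by
    linarith [triple_swap_right e A x c x, hl A x c]
  constructor
  · intro A a b c hca hcb
    rw [starB_wedge_contract]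
    fin_cases a <;> fin_cases b <;> fin_cases c <;>
      first
      | exact absurd rfl hca
      | exact absurd rfl hcb
      | simp [eps, sign_two, sign_three, Fin.sum_univ_four, hl, ho]
  · intro A a b c hba hca
    rw [starB_wedge_contract, starB_wedge_contract]
    have key : ∀ x y z : Fin 4, triple e A x z y = -triple e A x y z ∧
        triple e A y x z = -triple e A x y z ∧ triple e A y z x = triple e A x y z ∧
        triple e A z x y = triple e A x y z ∧ triple e A z y x = -triple e A x y z := by
      intro x y z
      have h1 := triple_swap_right e A x y z
      have h2 := triple_swap_left e A x y z
      have h3 := triple_swap_right e A y x z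
      have h4 := triple_swap_left e A x z y
      have h5 := triple_swap_right e A z x y
      refine ⟨h1, h2, ?_, ?_, ?_⟩ <;> linarith
    obtain ⟨p1, p2, p3, p4, p5⟩ := key 0 1 2
    obtain ⟨q1, q2, q3, q4, q5⟩ := key 0 1 3
    obtain ⟨r1, r2, r3, r4, r5⟩ := key 0 2 3
    obtain ⟨s1, s2, s3, s4, s5⟩ := key 1 2 3
    fin_cases a <;> fin_cases b <;> fin_cases c <;>
      first
      | exact absurd rfl hba
      | exact absurd rfl hca
      | rfl
      | (simp [eps, sign_two, sign_three, Fin.sum_univ_four]; linarith)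

/-- A single number determines the tetrad components of the dual of any internally antisymmetric
field obeying the constraints: antisymmetry in the last pair kills all components but those with `{d, c} = {a, b}`,
and makes these equal up to sign. -/
lemma comp_eq (e : Matrix (Fin 4) (Fin 4) ℝ) (X : Fin 4 → Fin 4 → Fin 4 → Fin 4 → ℝ)
    (hint : ∀ A B' a b : Fin 4, X A B' a b = -X B' A a b) (h : Constraints e X)
    (a b d c : Fin 4) :
    comp e X a b d c = comp e X 0 1 0 1 *
      ((if d = a ∧ c = b then 1 else 0) - (if d = b ∧ c = a then 1 else 0)) := by
  have hab : ∀ a b d c, comp e X b a d c = -comp e X a b d c := fun a b d c => by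
    simp only [comp, starB_swap_st X a b, neg_mul, Finset.sum_neg_distrib, mul_neg]
  have hdc : ∀ a b d c, comp e X a b c d = -comp e X a b d c := fun a b d c => by
    simp only [comp, Finset.mul_sum]
    rw [Finset.sum_comm, ← Finset.sum_neg_distrib]
    refine Finset.sum_congr rfl fun A _ => ?_
    rw [← Finset.sum_neg_distrib]
    refine Finset.sum_congr rfl fun B' _ => ?_
    rw [starB_swap_int X hint a b A B']; ring
  have h1 : ∀ a b d c, c ≠ a → c ≠ b → comp e X a b d c = 0 := fun a b d c ha hb => by
    simp only [comp, h.1 _ a b c ha hb, mul_zero, Finset.sum_const_zero]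
  have h2 : ∀ a b c d, b ≠ a → c ≠ a → comp e X a b d b = comp e X a c d c :=
    fun a b c d hb hc => by simp only [comp, h.2 _ a b c hb hc]
  have hdd : ∀ a b d, comp e X a b d d = 0 := fun a b d => by linarith [hdc a b d d]
  have haa : ∀ a d c, comp e X a a d c = 0 := fun a d c => by linarith [hab a a d c]
  -- The diagonal components agree: one index moves by `h2`, and both pairs can be reversed.
  have hflip : ∀ a b, comp e X b a b a = comp e X a b a b := fun a b => by
    linarith [hab a b b a, hdc a b a b]
  have hn : ∀ a b, a ≠ b → comp e X a b a b = comp e X 0 1 0 1 := fun a b hne => by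
    by_cases ha : a = 0
    · subst ha
      exact h2 0 b 1 0 hne.symm (by decide)
    · rw [h2 a b 0 a hne.symm (Ne.symm ha), hflip 0 a]
      exact h2 0 a 1 0 ha (by decide)
  by_cases hne : a = b
  · subst hne; simp [haa]
  by_cases hcb : c = b
  · subst hcb
    by_cases hda : d = a
    · subst hda; simp [hn d c hne, Ne.symm hne]
    · by_cases hdc' : d = c
      · subst hdc'; simp [hdd, hda]
      · rw [hdc a c c d, h1 a c c d hda hdc']; simp [hda, hdc']
  · by_cases hca : c = a
    · subst hca
      by_cases hdb : d = b
      · subst hdb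
        rw [hdc c d c d, hn c d hne]; simp [hne]
      · by_cases hdc' : d = c
        · subst hdc'; simp [hdd, hne]
        · rw [hdc c b c d, h1 c b c d hdc' hdb]; simp [hdb, hdc']
    · rw [h1 a b d c hca hcb]; simp [hca, hcb]

lemma comp_wedge (e : Matrix (Fin 4) (Fin 4) ℝ) : comp e (wedge e) 0 1 0 1 = e.det := by
  rw [Matrix.det_succ_row_zero]
  simp [comp, starB, wedge, eps, sign_two, sign_three, Fin.sum_univ_four,
    Matrix.det_fin_three, Fin.succAbove]
  ring

/-- Since the tetrad is invertible, a two-index tensor is determined by its tetrad components. -/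
lemma eq_of_components (e : Matrix (Fin 4) (Fin 4) ℝ) (hdet : e.det ≠ 0)
    (M N : Matrix (Fin 4) (Fin 4) ℝ)
    (h : ∀ d c, ∑ A : Fin 4, e A d * ∑ B' : Fin 4, M A B' * e B' c =
      ∑ A : Fin 4, e A d * ∑ B' : Fin 4, N A B' * e B' c) : M = N := by
  have hu : IsUnit e := (Matrix.isUnit_iff_isUnit_det e).2 hdet.isUnit
  have hut : IsUnit e.transpose :=
    (Matrix.isUnit_iff_isUnit_det _).2 (by rw [Matrix.det_transpose]; exact hdet.isUnit)
  have : e.transpose * (M * e) = e.transpose * (N * e) := by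
    ext d c
    simpa only [Matrix.mul_apply, Matrix.transpose_apply] using h d c
  exact hu.mul_right_cancel (hut.mul_left_cancel this)

/-- Linear simplicity lemma, dual (starred) form. -/
theorem linear_simplicity_starred (e : Matrix (Fin 4) (Fin 4) ℝ)
    (B : Fin 4 → Fin 4 → Fin 4 → Fin 4 → ℝ)
    (hdet : e.det ≠ 0)
    (hint : ∀ A B' a b : Fin 4, B A B' a b = -B B' A a b)
    (hst : ∀ A B' a b : Fin 4, B A B' a b = -B A B' b a) :
    ((∀ A a b c : Fin 4, c ≠ a → c ≠ b →
        ∑ B' : Fin 4, starB B a b A B' * e B' c = 0) ∧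
     (∀ A a b c : Fin 4, b ≠ a → c ≠ a →
        ∑ B' : Fin 4, starB B a b A B' * e B' b = ∑ B' : Fin 4, starB B a c A B' * e B' c))
    ↔ IsSimple e B := by
  constructor
  · intro h
    have h : Constraints e B := h
    refine ⟨comp e B 0 1 0 1 / e.det, fun A B' a b => ?_⟩
    have hstar : ∀ a b A B',
        starB B a b A B' = comp e B 0 1 0 1 / e.det * starB (wedge e) a b A B' := by
      intro a b A B'
      refine congrFun (congrFun (eq_of_components e hdet (starB B a b)
        (fun A B' => comp e B 0 1 0 1 / e.det * starB (wedge e) a b A B') fun d c => ?_) A) B'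
      have hB := comp_eq e B hint h a b d c
      have hW := comp_eq e (wedge e) (wedge_swap_int e) (constraints_wedge e) a b d c
      rw [comp_wedge] at hW
      have : comp e B a b d c = comp e B 0 1 0 1 / e.det * comp e (wedge e) a b d c := by
        rw [hB, hW]; field_simp
      simp only [mul_assoc, ← Finset.mul_sum, mul_left_comm (e _ d)]
      exact this
    change B A B' a b = _ * wedge e A B' a b
    rw [starB_starB B hst, starB_starB (wedge e) (wedge_swap_st e)]
    simp only [hstar, Finset.mul_sum]
    refine Finset.sum_congr rfl fun _ _ => Finset.sum_congr rfl fun _ _ => by ring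
  · rintro ⟨lam, hlam⟩
    have hB : B = fun A B' a b => lam * wedge e A B' a b := by
      funext A B' a b; exact hlam A B' a b
    obtain ⟨h1, h2⟩ := constraints_wedge e
    subst hB
    simp only [starB_smul, mul_assoc, ← Finset.mul_sum]
    refine ⟨fun A a b c ha hb => ?_, fun A a b c hb hc => ?_⟩
    · rw [h1 A a b c ha hb, mul_zero]
    · rw [h2 A a b c hb hc]
end

section
/- Linear simplicity lemma, unstarred form: let e : Matrix (Fin 4) (Fin 4) ℝ be a non-degenerate tetrad (det e ≠ 0) and let B be a bivector field. Then the following are equivalent: (I) for all A, a, b ∈ Fin 4 one has ∑_{B'} B A B' a b * e B' a = 0 and ∑_{B'} B A B' a b * e B' b = 0, and for all A ∈ Fin 4 and all pairwise distinct a, b, c ∈ Fin 4 one has ∑_{B'} (B A B' a b * e B' c + B A B' a c * e B' b) = 0; (II) B is simple with respect to e. -/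
/-- Total antisymmetry of a 4-tensor, expressed through the three adjacent transpositions. -/
structure IsAlt (X : Fin 4 → Fin 4 → Fin 4 → Fin 4 → ℝ) : Prop where
  swap₁ : ∀ a b c d, X a b c d = -X b a c d
  swap₂ : ∀ a b c d, X a b c d = -X a c b d
  swap₃ : ∀ a b c d, X a b c d = -X a b d c

/-- The pullback of `B` by the tetrad: its two internal indices, listed first, become spacetime
indices. -/
def pullback (e : Matrix (Fin 4) (Fin 4) ℝ) (B : Fin 4 → Fin 4 → Fin 4 → Fin 4 → ℝ)
    (d c a b : Fin 4) : ℝ :=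
  ∑ A, (∑ B', B A B' a b * e B' c) * e A d

/-- The bivector field `ε^{AB}_{CD} e^C_a e^D_b`. -/
noncomputable def epsTetrad (e : Matrix (Fin 4) (Fin 4) ℝ) (A B' a b : Fin 4) : ℝ :=
  ∑ C, ∑ D, eps A B' C D * e C a * e D b

theorem isAlt_eps : IsAlt eps := by
  constructor <;> intro a b c d <;> unfold eps <;> norm_cast <;> revert a b c d <;> decide

/-- A totally antisymmetric 4-tensor in dimension four is determined by its `0123` component. -/
theorem IsAlt.eq_zero {X : Fin 4 → Fin 4 → Fin 4 → Fin 4 → ℝ} (h : IsAlt X)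
    (h0 : X 0 1 2 3 = 0) (a b c d : Fin 4) : X a b c d = 0 := by
  -- The zero set of `X` is stable under adjacent transpositions.
  have s₁ : ∀ a b c d, X b a c d = 0 → X a b c d = 0 := fun a b c d k => by
    rw [h.swap₁, k, neg_zero]
  have s₂ : ∀ a b c d, X a c b d = 0 → X a b c d = 0 := fun a b c d k => by
    rw [h.swap₂, k, neg_zero]
  have s₃ : ∀ a b c d, X a b d c = 0 → X a b c d = 0 := fun a b c d k => by
    rw [h.swap₃, k, neg_zero]
  have r₁ : ∀ a c d, X a a c d = 0 := fun a c d => by linarith [h.swap₁ a a c d]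
  have r₂ : ∀ a b d, X a b b d = 0 := fun a b d => by linarith [h.swap₂ a b b d]
  have r₃ : ∀ a b c, X a b c c = 0 := fun a b c => by linarith [h.swap₃ a b c c]
  by_cases hab : a = b
  · subst hab; exact r₁ _ _ _
  by_cases hac : a = c
  · subst hac; exact s₂ _ _ _ _ (r₁ _ _ _)
  by_cases had : a = d
  · subst had; exact s₃ _ _ _ _ (s₂ _ _ _ _ (r₁ _ _ _))
  by_cases hbc : b = c
  · subst hbc; exact r₂ _ _ _
  by_cases hbd : b = d
  · subst hbd; exact s₃ _ _ _ _ (r₂ _ _ _)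
  by_cases hcd : c = d
  · subst hcd; exact r₃ _ _ _
  -- Bring the index `0` to the first place, then `1` to the second, then `2` to the third.
  have k₃ : ∀ c d : Fin 4, c ≠ d → c ≠ 0 → c ≠ 1 → d ≠ 0 → d ≠ 1 → X 0 1 c d = 0 := by
    intro c d h₁ h₂ h₃ h₄ h₅
    obtain ⟨rfl, rfl⟩ | ⟨rfl, rfl⟩ : c = 2 ∧ d = 3 ∨ c = 3 ∧ d = 2 := by omega
    · exact h0
    · exact s₃ _ _ _ _ h0
  have k₂ : ∀ b c d : Fin 4, b ≠ c → b ≠ d → c ≠ d → b ≠ 0 → c ≠ 0 → d ≠ 0 →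
      X 0 b c d = 0 := by
    intro b c d h₁ h₂ h₃ h₄ h₅ h₆
    obtain rfl | rfl | rfl : b = 1 ∨ c = 1 ∨ d = 1 := by omega
    · apply k₃ <;> omega
    · apply s₂; apply k₃ <;> omega
    · apply s₃; apply s₂; apply k₃ <;> omega
  obtain rfl | rfl | rfl | rfl : a = 0 ∨ b = 0 ∨ c = 0 ∨ d = 0 := by omega
  · apply k₂ <;> omega
  · apply s₁; apply k₂ <;> omega
  · apply s₂; apply s₁; apply k₂ <;> omega
  · apply s₃; apply s₂; apply s₁; apply k₂ <;> omega

theorem sum_mul_tetrad_eq_zero {e : Matrix (Fin 4) (Fin 4) ℝ} (hdet : e.det ≠ 0)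
    {v : Fin 4 → ℝ} (h : ∀ d, ∑ A, v A * e A d = 0) (A : Fin 4) : v A = 0 := by
  have := Matrix.eq_zero_of_vecMul_eq_zero hdet (v := v) (funext h)
  exact congrFun this A

theorem eq_zero_of_pullback {e : Matrix (Fin 4) (Fin 4) ℝ} (hdet : e.det ≠ 0)
    {B : Fin 4 → Fin 4 → Fin 4 → Fin 4 → ℝ} (h : ∀ d c a b, pullback e B d c a b = 0)
    (A B' a b : Fin 4) : B A B' a b = 0 :=
  sum_mul_tetrad_eq_zero hdet (v := fun B' => B A B' a b)
    (fun c => sum_mul_tetrad_eq_zero hdet (v := fun A => ∑ B', B A B' a b * e B' c)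
      (fun d => h d c a b) A) B'

theorem pullback_sub_mul (e : Matrix (Fin 4) (Fin 4) ℝ)
    (B S : Fin 4 → Fin 4 → Fin 4 → Fin 4 → ℝ) (l : ℝ) (d c a b : Fin 4) :
    pullback e (fun A B' a b => B A B' a b - l * S A B' a b) d c a b
      = pullback e B d c a b - l * pullback e S d c a b := by
  simp only [pullback, Finset.mul_sum, Finset.sum_mul, ← Finset.sum_sub_distrib]
  refine Finset.sum_congr rfl fun A _ => Finset.sum_congr rfl fun B' _ => by ring

theorem pullback_swap₁ {e : Matrix (Fin 4) (Fin 4) ℝ} {B : Fin 4 → Fin 4 → Fin 4 → Fin 4 → ℝ}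
    (hint : ∀ A B' a b, B A B' a b = -B B' A a b) (d c a b : Fin 4) :
    pullback e B d c a b = -pullback e B c d a b := by
  simp only [pullback, Finset.sum_mul, ← Finset.sum_neg_distrib]
  rw [Finset.sum_comm]
  refine Finset.sum_congr rfl fun A _ => Finset.sum_congr rfl fun B' _ => ?_
  rw [hint]; ring

theorem pullback_swap₃ {e : Matrix (Fin 4) (Fin 4) ℝ} {B : Fin 4 → Fin 4 → Fin 4 → Fin 4 → ℝ}
    (hst : ∀ A B' a b, B A B' a b = -B A B' b a) (d c a b : Fin 4) :
    pullback e B d c a b = -pullback e B d c b a := by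
  simp only [pullback, Finset.sum_mul, ← Finset.sum_neg_distrib]
  refine Finset.sum_congr rfl fun A _ => Finset.sum_congr rfl fun B' _ => ?_
  rw [hst]; ring

theorem isAlt_pullback_epsTetrad (e : Matrix (Fin 4) (Fin 4) ℝ) :
    IsAlt (pullback e (epsTetrad e)) where
  swap₁ := pullback_swap₁ fun A B' a b => by
    simp only [epsTetrad, ← Finset.sum_neg_distrib]
    refine Finset.sum_congr rfl fun C _ => Finset.sum_congr rfl fun D _ => ?_
    rw [isAlt_eps.swap₁]; ring
  swap₂ d c a b := by
    simp only [pullback, epsTetrad, Finset.sum_mul, ← Finset.sum_neg_distrib]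
    refine Finset.sum_congr rfl fun A _ => ?_
    rw [Finset.sum_comm]
    refine Finset.sum_congr rfl fun B' _ => Finset.sum_congr rfl fun C _ =>
      Finset.sum_congr rfl fun D _ => ?_
    rw [isAlt_eps.swap₂]; ring
  swap₃ := pullback_swap₃ fun A B' a b => by
    simp only [epsTetrad, ← Finset.sum_neg_distrib]
    rw [Finset.sum_comm]
    refine Finset.sum_congr rfl fun C _ => Finset.sum_congr rfl fun D _ => ?_
    rw [isAlt_eps.swap₃]; ring

theorem pullback_epsTetrad_0123 (e : Matrix (Fin 4) (Fin 4) ℝ) :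
    pullback e (epsTetrad e) 0 1 2 3 = e.det := by
  have h2 : Int.sign 2 = 1 := rfl
  have h3 : Int.sign 3 = 1 := rfl
  simp [pullback, epsTetrad, eps, Matrix.det_succ_row_zero, Fin.sum_univ_succ, Fin.succAbove,
    h2, h3]
  ring

theorem pullback_eq_mul {e : Matrix (Fin 4) (Fin 4) ℝ} {B : Fin 4 → Fin 4 → Fin 4 → Fin 4 → ℝ}
    {l : ℝ} (h : ∀ A B' a b, B A B' a b = l * epsTetrad e A B' a b) (d c a b : Fin 4) :
    pullback e B d c a b = l * pullback e (epsTetrad e) d c a b := by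
  simp only [pullback, h, Finset.mul_sum, Finset.sum_mul, mul_assoc]

/-- Simplicity is total antisymmetry of the pullback. No antisymmetry of `B` is presupposed: both
sides force it. -/
theorem isSimple_iff_isAlt {e : Matrix (Fin 4) (Fin 4) ℝ} (hdet : e.det ≠ 0)
    (B : Fin 4 → Fin 4 → Fin 4 → Fin 4 → ℝ) : IsSimple e B ↔ IsAlt (pullback e B) := by
  have hS := isAlt_pullback_epsTetrad e
  constructor
  · rintro ⟨l, hl⟩
    have hp := pullback_eq_mul (e := e) (B := B) (l := l) hl
    constructor <;> intro d c a b <;> rw [hp, hp, ← mul_neg]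
    · rw [← hS.swap₁]
    · rw [← hS.swap₂]
    · rw [← hS.swap₃]
  · intro hB
    -- The factor is fixed by comparing the `0123` components of the two pullbacks.
    refine ⟨pullback e B 0 1 2 3 / e.det, fun A B' a b => sub_eq_zero.1 ?_⟩
    refine eq_zero_of_pullback hdet (B := fun A B' a b =>
      B A B' a b - pullback e B 0 1 2 3 / e.det * epsTetrad e A B' a b) ?_ A B' a b
    refine IsAlt.eq_zero ⟨?_, ?_, ?_⟩ ?_
    · intro d c a b
      rw [pullback_sub_mul, pullback_sub_mul, hB.swap₁, hS.swap₁]; ring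
    · intro d c a b
      rw [pullback_sub_mul, pullback_sub_mul, hB.swap₂, hS.swap₂]; ring
    · intro d c a b
      rw [pullback_sub_mul, pullback_sub_mul, hB.swap₃, hS.swap₃]; ring
    · rw [pullback_sub_mul, pullback_epsTetrad_0123, div_mul_cancel₀ _ hdet, sub_self]

/-- Linear simplicity lemma, unstarred form. -/
theorem linear_simplicity_unstarred (e : Matrix (Fin 4) (Fin 4) ℝ)
    (B : Fin 4 → Fin 4 → Fin 4 → Fin 4 → ℝ)
    (hdet : e.det ≠ 0)
    (hint : ∀ A B' a b : Fin 4, B A B' a b = -B B' A a b)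
    (hst : ∀ A B' a b : Fin 4, B A B' a b = -B A B' b a) :
    ((∀ A a b : Fin 4,
        (∑ B' : Fin 4, B A B' a b * e B' a = 0) ∧ (∑ B' : Fin 4, B A B' a b * e B' b = 0)) ∧
     (∀ A a b c : Fin 4, a ≠ b → a ≠ c → b ≠ c →
        ∑ B' : Fin 4, (B A B' a b * e B' c + B A B' a c * e B' b) = 0))
    ↔ IsSimple e B := by
  rw [isSimple_iff_isAlt hdet]
  constructor
  · rintro ⟨h₁, h₂⟩
    refine ⟨pullback_swap₁ hint, fun d c a b => ?_, pullback_swap₃ hst⟩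
    simp only [pullback, ← Finset.sum_neg_distrib]
    refine Finset.sum_congr rfl fun A _ => ?_
    -- The contraction `T a b c` of one internal index is antisymmetric in `(a, b)`, and in
    -- `(b, c)` by the constraints, so it is antisymmetric in `(a, c)`.
    set T : Fin 4 → Fin 4 → Fin 4 → ℝ := fun a b c => ∑ B', B A B' a b * e B' c with hT
    have t₁ : ∀ a b c, T a b c = -T b a c := fun a b c => by
      simp only [hT, ← Finset.sum_neg_distrib, ← neg_mul, ← hst]
    have t₂ : ∀ a b c, T a b c = -T a c b := fun a b c => by
      have r₁ : ∀ a b, T a b a = 0 := fun a b => (h₁ A a b).1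
      have r₂ : ∀ a b, T a b b = 0 := fun a b => (h₁ A a b).2
      have r₃ : ∀ a c, T a a c = 0 := fun a c => by linarith [t₁ a a c]
      by_cases hab : a = b
      · subst hab; rw [r₁, r₃, neg_zero]
      by_cases hac : a = c
      · subst hac; rw [r₁, r₃, neg_zero]
      by_cases hbc : b = c
      · subst hbc; rw [r₂, neg_zero]
      have := h₂ A a b c hab hac hbc
      rw [Finset.sum_add_distrib] at this
      exact eq_neg_of_add_eq_zero_left this
    have : T a b c = -T c b a := by linarith [t₁ a b c, t₂ b a c, t₁ b c a]
    change T a b c * _ = -(T c b a * _)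
    rw [this, neg_mul]
  · intro h
    refine ⟨fun A a b => ⟨?_, ?_⟩, fun A a b c _ _ _ => ?_⟩
    · refine sum_mul_tetrad_eq_zero hdet (v := fun A => ∑ B', B A B' a b * e B' a)
        (fun d => ?_) A
      change pullback e B d a a b = 0
      linarith [h.swap₂ d a a b]
    · refine sum_mul_tetrad_eq_zero hdet (v := fun A => ∑ B', B A B' a b * e B' b)
        (fun d => ?_) A
      change pullback e B d b a b = 0
      linarith [h.swap₃ d b a b, h.swap₂ d b b a]
    · refine sum_mul_tetrad_eq_zero hdet
        (v := fun A => ∑ B', (B A B' a b * e B' c + B A B' a c * e B' b)) (fun d => ?_) A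
      simp only [Finset.sum_add_distrib, add_mul]
      change pullback e B d c a b + pullback e B d b a c = 0
      linarith [h.swap₂ d c a b, h.swap₃ d a c b, h.swap₂ d a b c]
end

section
/- Let e : Matrix (Fin 4) (Fin 4) ℝ be invertible and let w : Matrix (Fin 4) (Fin 4) ℝ. If for all A, B, a, b ∈ Fin 4 the antisymmetrized combination satisfies e A a * w B b − e A b * w B a = −(e B a * w A b − e B b * w A a), then there exists λ : ℝ such that w = λ • e. -/
/-! Contract both spacetime indices of the hypothesis with `e⁻¹`. For `M = w * e⁻¹` it becomes
`δ_AC M_BD - δ_AD M_BC + δ_BC M_AD - δ_BD M_AC = 0`. Taking `A = B = C ≠ D` gives `M_AD = 0`,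
and `A = C ≠ B = D` gives `M_BB = M_AA`; hence `M` is a scalar matrix and `w = M * e` is a
multiple of `e`. -/

/-- The hypothesis with both spacetime indices contracted with an arbitrary matrix `f`. -/
theorem contract_double_antisymmetry (e w f : Matrix (Fin 4) (Fin 4) ℝ)
    (h : ∀ A B a b : Fin 4,
      e A a * w B b - e A b * w B a = -(e B a * w A b - e B b * w A a))
    (A B C D : Fin 4) :
    (e * f) A C * (w * f) B D - (e * f) A D * (w * f) B C
      + (e * f) B C * (w * f) A D - (e * f) B D * (w * f) A C = 0 := by
  have key : (e * f) A C * (w * f) B D - (e * f) A D * (w * f) B C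
      + (e * f) B C * (w * f) A D - (e * f) B D * (w * f) A C
      = ∑ a, ∑ b, f a C * f b D *
        ((e A a * w B b - e A b * w B a) + (e B a * w A b - e B b * w A a)) := by
    simp only [Matrix.mul_apply, Fin.sum_univ_four]
    ring
  rw [key]
  refine Finset.sum_eq_zero fun a _ => Finset.sum_eq_zero fun b _ => ?_
  rw [h A B a b, neg_add_cancel, mul_zero]

/-- If the tensor e^A_a w^B_b − e^A_b w^B_a (antisymmetric in (a,b)) is also antisymmetric
in the internal pair (A,B), and `e` is invertible, then `w` is proportional to `e`. -/
theorem proportional_of_double_antisymmetry (e w : Matrix (Fin 4) (Fin 4) ℝ)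
    [Invertible e]
    (h : ∀ A B a b : Fin 4,
      e A a * w B b - e A b * w B a = -(e B a * w A b - e B b * w A a)) :
    ∃ lam : ℝ, w = lam • e := by
  have hc := contract_double_antisymmetry e w (⅟e) h
  rw [mul_invOf_self] at hc
  have hM : w * ⅟e = (w * ⅟e) 0 0 • (1 : Matrix (Fin 4) (Fin 4) ℝ) := by
    ext A D
    by_cases hAD : A = D
    · subst hAD
      by_cases hA : A = 0
      · subst hA
        simp
      · have := hc 0 A 0 A
        simp only [Matrix.one_apply_eq, Matrix.one_apply_ne hA,
          Matrix.one_apply_ne (Ne.symm hA)] at this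
        simp only [Matrix.smul_apply, Matrix.one_apply_eq, smul_eq_mul]
        linarith
    · have := hc A A A D
      simp only [Matrix.one_apply_eq, Matrix.one_apply_ne hAD] at this
      simp only [Matrix.smul_apply, Matrix.one_apply_ne hAD, smul_eq_mul]
      linarith
  refine ⟨(w * ⅟e) 0 0, ?_⟩
  calc w = w * ⅟e * e := by rw [mul_assoc, invOf_mul_self, mul_one]
    _ = (w * ⅟e) 0 0 • e := by
      conv_lhs => rw [hM]
      rw [smul_mul_assoc, one_mul]
end

section
/- Dual form of the Gielen–Oriti constraint implies simplicity: let e : Matrix (Fin 4) (Fin 4) ℝ be a non-degenerate tetrad (det e ≠ 0), and let Σ : Fin 4 → Fin 4 → Fin 4 → Fin 4 → ℝ, written Σ A B a b, be antisymmetric in (A,B) and in (a,b). If there exists v : Matrix (Fin 4) (Fin 4) ℝ such that for all c, B, a, b ∈ Fin 4: ∑_{A} (Matrix.adjugate e) c A * Σ A B a b = (if c = a then 1 else 0) * v B b − (if c = b then 1 else 0) * v B a, then there exists λ : ℝ such that Σ A B a b = λ * (e A a * e B b − e B a * e A b) for all indices. -/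
/-!
Write `adj` for the adjugate of `e` and contract both internal indices of `S` with `adj`: by
hypothesis the result is `δ c a * w d b - δ c b * w d a`, where `w = adj * v`
(`contract_eq`). Antisymmetry of `S` in its internal indices makes this expression antisymmetric in
`(c, d)`. Taking `c = d = a ≠ b` kills the off-diagonal entries of `w`, and taking `c = a`, `d = b`
equates the diagonal ones, so `w` is a scalar matrix `μ • 1` (`adjugate_mul_eq_smul_one`).
Multiplying by `e` gives `det e • v = μ • e`. Undoing the contraction of a single index gives
`det e * S A B a b = e A a * v B b - e A b * v B a`, and combining the two yields the claim with
`lam = μ / (det e) ^ 2`.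
-/

/-- The hypothesis with the remaining internal index contracted as well. -/
lemma contract_eq (f v : Matrix (Fin 4) (Fin 4) ℝ) (S : Fin 4 → Fin 4 → Fin 4 → Fin 4 → ℝ)
    (hv : ∀ c B a b : Fin 4, ∑ A : Fin 4, f c A * S A B a b
      = (if c = a then (1 : ℝ) else 0) * v B b - (if c = b then (1 : ℝ) else 0) * v B a)
    (c d a b : Fin 4) :
    ∑ B : Fin 4, ∑ A : Fin 4, f d B * (f c A * S A B a b)
      = (if c = a then (1 : ℝ) else 0) * (f * v) d b
        - (if c = b then (1 : ℝ) else 0) * (f * v) d a := by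
  simp only [← Finset.mul_sum, hv, Matrix.mul_apply]
  rw [Finset.mul_sum, Finset.mul_sum, ← Finset.sum_sub_distrib]
  exact Finset.sum_congr rfl fun B _ => by ring

lemma adjugate_mul_eq_smul_one (f v : Matrix (Fin 4) (Fin 4) ℝ)
    (S : Fin 4 → Fin 4 → Fin 4 → Fin 4 → ℝ)
    (hint : ∀ A B a b : Fin 4, S A B a b = -S B A a b)
    (hv : ∀ c B a b : Fin 4, ∑ A : Fin 4, f c A * S A B a b
      = (if c = a then (1 : ℝ) else 0) * v B b - (if c = b then (1 : ℝ) else 0) * v B a) :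
    f * v = (f * v) 0 0 • (1 : Matrix (Fin 4) (Fin 4) ℝ) := by
  have anti : ∀ c d a b : Fin 4,
      (if c = a then (1 : ℝ) else 0) * (f * v) d b - (if c = b then (1 : ℝ) else 0) * (f * v) d a
        = -((if d = a then (1 : ℝ) else 0) * (f * v) c b
          - (if d = b then (1 : ℝ) else 0) * (f * v) c a) := by
    intro c d a b
    rw [← contract_eq f v S hv, ← contract_eq f v S hv, Finset.sum_comm,
      ← Finset.sum_neg_distrib]
    refine Finset.sum_congr rfl fun A _ => ?_
    rw [← Finset.sum_neg_distrib]
    refine Finset.sum_congr rfl fun B _ => ?_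
    rw [hint A B]
    ring
  ext a b
  rw [Matrix.smul_apply, Matrix.one_apply, smul_eq_mul]
  by_cases hab : a = b
  · subst hab
    by_cases ha : a = 0
    · simp [ha]
    · have h := anti 0 a 0 a
      simp only [ha, Ne.symm ha, if_true, if_false] at h ⊢
      linarith
  · have h := anti a a a b
    simp only [hab, if_true, if_false] at h ⊢
    linarith

/-- Dual form of the Gielen–Oriti linear volume/simplicity constraint implies simplicity. -/
theorem gielen_oriti_dual_implies_simple (e : Matrix (Fin 4) (Fin 4) ℝ)
    (S : Fin 4 → Fin 4 → Fin 4 → Fin 4 → ℝ)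
    (hdet : e.det ≠ 0)
    (hint : ∀ A B a b : Fin 4, S A B a b = -S B A a b)
    (hst : ∀ A B a b : Fin 4, S A B a b = -S A B b a)
    (hv : ∃ v : Matrix (Fin 4) (Fin 4) ℝ, ∀ c B a b : Fin 4,
        ∑ A : Fin 4, (Matrix.adjugate e) c A * S A B a b
          = (if c = a then (1 : ℝ) else 0) * v B b - (if c = b then (1 : ℝ) else 0) * v B a) :
    ∃ lam : ℝ, ∀ A B a b : Fin 4,
      S A B a b = lam * (e A a * e B b - e B a * e A b) := by
  obtain ⟨v, hv⟩ := hv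
  have hw := adjugate_mul_eq_smul_one e.adjugate v S hint hv
  set μ := (e.adjugate * v) 0 0
  have hvM : e.det • v = μ • e := by
    have h := congrArg (e * ·) hw
    simpa [← Matrix.mul_assoc, Matrix.mul_adjugate] using h
  have hve : ∀ B b, e.det * v B b = μ * e B b := fun B b => by
    simpa using congrFun (congrFun hvM B) b
  have hS : ∀ A B a b, e.det * S A B a b = e A a * v B b - e A b * v B a := by
    intro A B a b
    -- For fixed `B`, `a`, `b`, view `S` as a vector in its first index and apply `e * adj = det e`.
    have h : (e * e.adjugate).mulVec (fun D => S D B a b) A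
        = ∑ c, e A c * ∑ D, e.adjugate c D * S D B a b := by
      rw [← Matrix.mulVec_mulVec]
      rfl
    simp only [hv] at h
    rw [Matrix.mul_adjugate, Matrix.smul_mulVec, Matrix.one_mulVec] at h
    simpa [mul_sub, Finset.sum_sub_distrib] using h
  refine ⟨μ / e.det ^ 2, fun A B a b => ?_⟩
  rw [div_mul_eq_mul_div, eq_div_iff (pow_ne_zero 2 hdet)]
  linear_combination e.det * hS A B a b + e A a * hve B b - e A b * hve B a
end

section
/- Linear simplicity implies quadratic simplicity: let V : Fin 4 → ℝ be nonzero, and let Σ, Σ' : Matrix (Fin 4) (Fin 4) ℝ be antisymmetric matrices such that ∑_{B} Σ A B * V B = 0 and ∑_{B} Σ' A B * V B = 0 for all A ∈ Fin 4. Then ∑_{A,B,C,D} ε A B C D * Σ A B * Σ' C D = 0. (In particular, taking Σ' = Σ gives the diagonal simplicity constraint, and distinct Σ, Σ' give cross-simplicity.) -/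
/-- The coefficient of `e⁰ ∧ e¹ ∧ e² ∧ e³` in the wedge product of the 2-forms
`∑_{A < B} S A B eᴬ ∧ eᴮ` and `∑_{A < B} T A B eᴬ ∧ eᴮ`. Only entries above the diagonal enter. -/
def wedgeCoeff (S T : Matrix (Fin 4) (Fin 4) ℝ) : ℝ :=
  S 0 1 * T 2 3 - S 0 2 * T 1 3 + S 0 3 * T 1 2
    + S 1 2 * T 0 3 - S 1 3 * T 0 2 + S 2 3 * T 0 1

lemma diag_eq_zero {S : Matrix (Fin 4) (Fin 4) ℝ} (hS : ∀ A B : Fin 4, S A B = -S B A)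
    (A : Fin 4) : S A A = 0 := by
  linarith [hS A A]

lemma eps_pairing_eq (S T : Matrix (Fin 4) (Fin 4) ℝ)
    (hS : ∀ A B : Fin 4, S A B = -S B A) (hT : ∀ A B : Fin 4, T A B = -T B A) :
    ∑ A : Fin 4, ∑ B : Fin 4, ∑ C : Fin 4, ∑ D : Fin 4, eps A B C D * S A B * T C D
      = 4 * wedgeCoeff S T := by
  simp only [Fin.sum_univ_four, eps, wedgeCoeff, diag_eq_zero hS, diag_eq_zero hT,
    hS 1 0, hS 2 0, hS 3 0, hS 2 1, hS 3 1, hS 3 2,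
    hT 1 0, hT 2 0, hT 3 0, hT 2 1, hT 3 1, hT 3 2]
  have s1 : Int.sign (-1) = -1 := rfl
  have s2 : Int.sign (-2) = -1 := rfl
  have s3 : Int.sign (-3) = -1 := rfl
  have t2 : Int.sign 2 = 1 := rfl
  have t3 : Int.sign 3 = 1 := rfl
  norm_num [s1, s2, s3, t2, t3]
  ring

/-- The component form of `ι_V (S ∧ T) = 0` for 2-forms `S`, `T` annihilated by `V`. -/
lemma wedgeCoeff_mul_eq_zero (V : Fin 4 → ℝ) (S T : Matrix (Fin 4) (Fin 4) ℝ)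
    (hS : ∀ A B : Fin 4, S A B = -S B A) (hT : ∀ A B : Fin 4, T A B = -T B A)
    (h1 : ∀ A : Fin 4, ∑ B : Fin 4, S A B * V B = 0)
    (h2 : ∀ A : Fin 4, ∑ B : Fin 4, T A B * V B = 0) (k : Fin 4) :
    wedgeCoeff S T * V k = 0 := by
  have a0 := h1 0
  have a1 := h1 1
  have a2 := h1 2
  have a3 := h1 3
  have b0 := h2 0
  have b1 := h2 1
  have b2 := h2 2
  have b3 := h2 3
  simp only [Fin.sum_univ_four, diag_eq_zero hS, diag_eq_zero hT,
    hS 1 0, hS 2 0, hS 3 0, hS 2 1, hS 3 1, hS 3 2,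
    hT 1 0, hT 2 0, hT 3 0, hT 2 1, hT 3 1, hT 3 2] at a0 a1 a2 a3 b0 b1 b2 b3
  unfold wedgeCoeff
  -- In each case the combination is, up to sign, the component of the 3-form
  -- `ι_V S ∧ T + S ∧ ι_V T` on the three basis vectors other than `e_k`.
  match k with
  | 0 => linear_combination -T 2 3 * a1 + T 1 3 * a2 - T 1 2 * a3
      - S 2 3 * b1 + S 1 3 * b2 - S 1 2 * b3
  | 1 => linear_combination T 2 3 * a0 - T 0 3 * a2 + T 0 2 * a3
      + S 2 3 * b0 - S 0 3 * b2 + S 0 2 * b3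
  | 2 => linear_combination -T 1 3 * a0 + T 0 3 * a1 - T 0 1 * a3
      - S 1 3 * b0 + S 0 3 * b1 - S 0 1 * b3
  | 3 => linear_combination T 1 2 * a0 - T 0 2 * a1 + T 0 1 * a2
      + S 1 2 * b0 - S 0 2 * b1 + S 0 1 * b2

/-- Linear simplicity w.r.t. a common nonzero normal implies the quadratic
(diagonal and cross-) simplicity constraints. -/
theorem linear_implies_quadratic_simplicity (V : Fin 4 → ℝ) (hV : V ≠ 0)
    (S S' : Matrix (Fin 4) (Fin 4) ℝ)
    (hS : ∀ A B : Fin 4, S A B = -S B A)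
    (hS' : ∀ A B : Fin 4, S' A B = -S' B A)
    (h1 : ∀ A : Fin 4, ∑ B : Fin 4, S A B * V B = 0)
    (h2 : ∀ A : Fin 4, ∑ B : Fin 4, S' A B * V B = 0) :
    ∑ A : Fin 4, ∑ B : Fin 4, ∑ C : Fin 4, ∑ D : Fin 4,
      eps A B C D * S A B * S' C D = 0 := by
  obtain ⟨k, hk⟩ := Function.ne_iff.mp hV
  have h := (mul_eq_zero.mp (wedgeCoeff_mul_eq_zero V S S' hS hS' h1 h2 k)).resolve_right hk
  rw [eps_pairing_eq S S' hS hS', h, mul_zero]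
end

section
/- Volume constraint from closure and cross-simplicity in the 4-simplex: let B : Fin 5 → Fin 5 → Matrix (Fin 4) (Fin 4) ℝ be a configuration of bivectors on the complete graph on 5 vertices satisfying closure and cross-simplicity. Then for all pairwise distinct i, j, k, l, m ∈ Fin 5: ⟨B i j, B l m⟩ + ⟨B i k, B l m⟩ = 0. -/
/-!
Pair the closure relation at `i`, namely `B i j + B i k + B i l + B i m = 0`, with `B l m`. The edges
`{i, l}` and `{i, m}` each share a vertex with `{l, m}`, so after reorienting edges the pairings
`⟨B i l, B l m⟩` and `⟨B i m, B l m⟩` vanish by cross-simplicity; the two remaining terms are the claim.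
-/

open Matrix

/-- The ε-pairing ⟨X, Y⟩ = ε^{ABCD} X_{AB} Y_{CD} of two (antisymmetric) 4×4 matrices. -/
noncomputable def epsPairing (X Y : Matrix (Fin 4) (Fin 4) ℝ) : ℝ :=
  ∑ A : Fin 4, ∑ B : Fin 4, ∑ C : Fin 4, ∑ D : Fin 4, eps A B C D * X A B * Y C D

theorem epsPairing_add_left (X X' Y : Matrix (Fin 4) (Fin 4) ℝ) :
    epsPairing (X + X') Y = epsPairing X Y + epsPairing X' Y := by
  simp only [epsPairing, Matrix.add_apply, mul_add, add_mul, Finset.sum_add_distrib]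

theorem epsPairing_neg_left (X Y : Matrix (Fin 4) (Fin 4) ℝ) :
    epsPairing (-X) Y = -epsPairing X Y := by
  simp only [epsPairing, Matrix.neg_apply, mul_neg, neg_mul, Finset.sum_neg_distrib]

theorem epsPairing_neg_right (X Y : Matrix (Fin 4) (Fin 4) ℝ) :
    epsPairing X (-Y) = -epsPairing X Y := by
  simp only [epsPairing, Matrix.neg_apply, mul_neg, Finset.sum_neg_distrib]

theorem epsPairing_zero_left (Y : Matrix (Fin 4) (Fin 4) ℝ) : epsPairing 0 Y = 0 := by
  simp [epsPairing]

/-- The volume constraint follows from closure and cross-simplicity in the 4-simplex. -/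
theorem volume_constraint_of_closure_cross_simplicity
    (B : Fin 5 → Fin 5 → Matrix (Fin 4) (Fin 4) ℝ)
    (hanti : ∀ i j : Fin 5, (B i j)ᵀ = -(B i j))
    (hskew : ∀ i j : Fin 5, B i j = -(B j i))
    (hclosure : ∀ i : Fin 5, ∑ j ∈ Finset.univ.filter (fun j => j ≠ i), B i j = 0)
    (hcross : ∀ i j k : Fin 5, i ≠ j → i ≠ k → j ≠ k → epsPairing (B i j) (B i k) = 0) :
    ∀ i j k l m : Fin 5, i ≠ j → i ≠ k → i ≠ l → i ≠ m → j ≠ k → j ≠ l → j ≠ m →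
      k ≠ l → k ≠ m → l ≠ m →
      epsPairing (B i j) (B l m) + epsPairing (B i k) (B l m) = 0 := by
  intro i j k l m hij hik hil him hjk hjl hjm hkl hkm hlm
  have hset : Finset.univ.filter (fun x : Fin 5 => x ≠ i) = {j, k, l, m} := by
    ext x
    simp only [Finset.mem_filter, Finset.mem_univ, true_and, Finset.mem_insert,
      Finset.mem_singleton]
    omega
  have hsum : B i j + (B i k + (B i l + B i m)) = 0 := by
    have h := hclosure i
    rwa [hset, Finset.sum_insert (by simp [hjk, hjl, hjm]), Finset.sum_insert (by simp [hkl, hkm]),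
      Finset.sum_insert (by simp [hlm]), Finset.sum_singleton] at h
  have hl : epsPairing (B i l) (B l m) = 0 := by
    rw [hskew i l, epsPairing_neg_left, hcross l i m hil.symm hlm him, neg_zero]
  have hm : epsPairing (B i m) (B l m) = 0 := by
    rw [hskew i m, hskew l m, epsPairing_neg_left, epsPairing_neg_right,
      hcross m i l him.symm hlm.symm hil, neg_zero, neg_zero]
  have h : epsPairing (B i j + (B i k + (B i l + B i m))) (B l m) = 0 := by
    rw [hsum, epsPairing_zero_left]
  simpa only [epsPairing_add_left, hl, hm, add_zero] using h
end

section
/- Geometricity and edge lengths of the hypercuboid from the linear volume constraints: let V : Fin 4 → ℝ and B : Fin 4 → Fin 4 → ℝ satisfy V i > 0 for all i, B i j = B j i and B i j > 0 for all i ≠ j, together with the proportion V i * B j k = V j * B i k for all pairwise distinct i, j, k (the relation |V_i|/|V_j| = |B_{ik}|/|B_{jk}| derived from the linear volume constraints). Then: (a) for all pairwise distinct i, j, k, l one has B i k * B j l = B i l * B j k (the geometricity conditions); and (b) for each k there exists E > 0 such that V i = E * B i k for all i ≠ k (existence of a well-defined edge length E_k = |V_i|/|B_{ik}| independent of i). 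-/
/-- Geometricity and edge lengths of the hypercuboid from the linear volume constraints. -/
theorem hypercuboid_geometricity_and_edge_lengths
    (V : Fin 4 → ℝ) (B : Fin 4 → Fin 4 → ℝ)
    (hV : ∀ i, 0 < V i)
    (hsym : ∀ i j, B i j = B j i)
    (hpos : ∀ i j, i ≠ j → 0 < B i j)
    (hprop : ∀ i j k : Fin 4, i ≠ j → i ≠ k → j ≠ k → V i * B j k = V j * B i k) :
    (∀ i j k l : Fin 4, i ≠ j → i ≠ k → i ≠ l → j ≠ k → j ≠ l → k ≠ l →
        B i k * B j l = B i l * B j k) ∧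
    (∀ k : Fin 4, ∃ E : ℝ, 0 < E ∧ ∀ i, i ≠ k → V i = E * B i k) := by
  refine ⟨fun i j k l hij hik hil hjk hjl _ => ?_, fun k => ?_⟩
  · -- Both `k` and `l` compute the same ratio `V i / V j`; cancel `V i`.
    have h₁ := hprop i j k hij hik hjk
    have h₂ := hprop i j l hij hil hjl
    refine mul_left_cancel₀ (hV i).ne' ?_
    linear_combination B i k * h₂ - B i l * h₁
  · -- Any index other than `k` defines the edge length; `k + 1` (mod 4) is one.
    obtain ⟨j, hj⟩ : ∃ j : Fin 4, j ≠ k := ⟨k + 1, by revert k; decide⟩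
    have hB := hpos j k hj
    refine ⟨V j / B j k, div_pos (hV j) hB, fun i hi => ?_⟩
    rw [div_mul_eq_mul_div, eq_div_iff hB.ne']
    rcases eq_or_ne i j with rfl | hij
    · rfl
    · exact hprop i j k hij hi hj
end
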